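/- For each c > 0 there exists C > 0 with the following property. Let τ ∈ ℂ satisfy Re τ ≥ 2 and Im τ ≥ c / log(Re τ). Let v be a smooth function on M and set ρ = (−τ² − Δ_g + iτ a) v. If u : [0,∞) × M → ℂ is a smooth solution of the damped wave equation ∂_t²u − Δ_g u + a ∂_t u = 0 with u(0,·) = v and ∂_t u(0,·) = iτ v, then for all t ≥ 0, E(u − e^{i t τ} v)(t)^{1/2} ≤ C log(Re τ) · ‖ρ‖_{L²(M)}, i.e. the energy of the difference w(t,·) = u(t,·) − e^{itτ} v satisfies ∫₀^{2π}∫₀^{2π} (|∂_t w|² + |∂_z w|² + R^{-2}|∂_θ w|²) R(z) dz dθ ≤ C² log²(Re τ) ‖ρ‖²_{L²(M)}. -/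

import Mathlib

/-!
The difference `w = u - e^{itτ} v` solves the damped wave equation with vanishing Cauchy data and
source `-e^{itτ} ρ`, whose size decays like `e^{-bt} |ρ|` with `b = Im τ`. The damping only
dissipates energy, so the energy identity (`hasDerivAt_energy`) gives
`E' ≤ 2 e^{-bt} ∫ |ρ| |w_t| ≤ e^{-bt} (b E + ‖ρ‖² / b)`, and a Gronwall argument
(`gronwall_exp`, `energy_estimate`) yields
`E ≤ (e - 1) ‖ρ‖² / b² ≤ 2 ‖ρ‖² / b²`. Weighting Young's inequality by `b` avoids
differentiating `E^{1/2}`, which may fail where `E = 0`. As `1 / b ≤ log(Re τ) / c`, the constant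
`C = 2 / c` works.
-/

open Real MeasureTheory Filter

noncomputable section

/-- The Laplace–Beltrami operator of the warped-product metric
`g = dz² + R(z)² dθ²`. -/
def lapg (R : ℝ → ℝ) (u : ℝ → ℝ → ℂ) (z θ : ℝ) : ℂ :=
  ((R z : ℂ))⁻¹ * deriv (fun w : ℝ => (R w : ℂ) * deriv (fun w' : ℝ => u w' θ) w) z
    + (((R z : ℂ)) ^ 2)⁻¹ * deriv (fun p : ℝ => deriv (fun p' : ℝ => u z p') p) θ

/-- Squared `L²(M)` norm with respect to the Riemannian volume `R(z) dz dθ`. -/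
def l2normSq (R : ℝ → ℝ) (u : ℝ → ℝ → ℂ) : ℝ :=
  ∫ θ in (0:ℝ)..(2 * Real.pi), ∫ z in (0:ℝ)..(2 * Real.pi), ‖u z θ‖ ^ 2 * R z

/-- Smooth functions on the torus `M`. -/
def Smooth2 (u : ℝ → ℝ → ℂ) : Prop := ContDiff ℝ (⊤ : ℕ∞) (fun p : ℝ × ℝ => u p.1 p.2)

/-- `2π`-periodicity in each variable. -/
def Periodic2 (u : ℝ → ℝ → ℂ) : Prop :=
  ∀ z θ, u (z + 2 * Real.pi) θ = u z θ ∧ u z (θ + 2 * Real.pi) = u z θ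

/-- The energy of a time-dependent function on `M` at time `t`:
`E(w)(t) = ∫∫ (|∂_t w|² + |∂_z w|² + R⁻²|∂_θ w|²) R(z) dz dθ`. -/
def energy (R : ℝ → ℝ) (w : ℝ → ℝ → ℝ → ℂ) (t : ℝ) : ℝ :=
  ∫ θ in (0:ℝ)..(2 * Real.pi), ∫ z in (0:ℝ)..(2 * Real.pi),
    (‖deriv (fun s : ℝ => w s z θ) t‖ ^ 2 + ‖deriv (fun q : ℝ => w t q θ) z‖ ^ 2
      + ((R z) ^ 2)⁻¹ * ‖deriv (fun p : ℝ => w t z p) θ‖ ^ 2) * R z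

/-! ### Integrals depending on a parameter -/

/-- Differentiation under the integral sign over a compact interval: joint continuity of the
integrand and of its derivative in the parameter suffices, since the derivative is then bounded
on compact sets. -/
lemma hasDerivAt_param_integral {f f' : ℝ → ℝ → ℝ} (a b : ℝ)
    (hf : Continuous f.uncurry) (hf' : Continuous f'.uncurry)
    (hd : ∀ t x, HasDerivAt (fun s => f s x) (f' t x) t) (t : ℝ) :
    HasDerivAt (fun s => ∫ x in a..b, f s x) (∫ x in a..b, f' t x) t := by
  obtain ⟨K, hK⟩ := ((isCompact_closedBall t 1).prod (isCompact_uIcc (a := a) (b := b))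
    ).exists_bound_of_continuousOn hf'.continuousOn
  refine (intervalIntegral.hasDerivAt_integral_of_dominated_loc_of_deriv_le (F := f) (F' := f')
    (bound := fun _ => K) (Metric.closedBall_mem_nhds t one_pos) ?_ ?_ ?_ ?_ ?_ ?_).2
  · exact Eventually.of_forall fun s =>
      (hf.comp (by fun_prop : Continuous fun x => (s, x))).aestronglyMeasurable
  · exact (hf.comp (by fun_prop : Continuous fun x => (t, x))).intervalIntegrable _ _
  · exact (hf'.comp (by fun_prop : Continuous fun x => (t, x))).aestronglyMeasurable
  · exact Eventually.of_forall fun x hx s hs => hK (s, x) ⟨hs, Set.uIoc_subset_uIcc hx⟩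
  · exact intervalIntegrable_const
  · exact Eventually.of_forall fun x _ s _ => hd s x

/-- The integral of a function of `(z, θ)` over the fundamental domain `[0, 2π]²` of the torus,
with respect to `dz dθ`. -/
def torusInt (f : ℝ → ℝ → ℝ) : ℝ :=
  ∫ θ in (0:ℝ)..(2 * Real.pi), ∫ z in (0:ℝ)..(2 * Real.pi), f z θ

lemma continuous_inner_torusInt {f : ℝ → ℝ → ℝ} (hf : Continuous f.uncurry) :
    Continuous fun θ => ∫ z in (0:ℝ)..(2 * Real.pi), f z θ :=
  intervalIntegral.continuous_parametric_intervalIntegral_of_continuous'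
    (f := fun θ z => f z θ) (hf.comp continuous_swap) _ _

lemma intervalIntegrable_slice {f : ℝ → ℝ → ℝ} (hf : Continuous f.uncurry) (θ a b : ℝ) :
    IntervalIntegrable (fun z => f z θ) volume a b :=
  (hf.comp (by fun_prop : Continuous fun z => (z, θ))).intervalIntegrable _ _

lemma torusInt_mono {f g : ℝ → ℝ → ℝ} (hf : Continuous f.uncurry) (hg : Continuous g.uncurry)
    (h : ∀ z θ, f z θ ≤ g z θ) : torusInt f ≤ torusInt g := by
  have hpi : (0:ℝ) ≤ 2 * Real.pi := by positivity
  refine intervalIntegral.integral_mono hpi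
    ((continuous_inner_torusInt hf).intervalIntegrable _ _)
    ((continuous_inner_torusInt hg).intervalIntegrable _ _) fun θ => ?_
  exact intervalIntegral.integral_mono hpi (intervalIntegrable_slice hf _ _ _)
    (intervalIntegrable_slice hg _ _ _) fun z => h z θ

lemma torusInt_add {f g : ℝ → ℝ → ℝ} (hf : Continuous f.uncurry) (hg : Continuous g.uncurry) :
    torusInt (fun z θ => f z θ + g z θ) = torusInt f + torusInt g := by
  unfold torusInt
  rw [← intervalIntegral.integral_add ((continuous_inner_torusInt hf).intervalIntegrable _ _)
    ((continuous_inner_torusInt hg).intervalIntegrable _ _)]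
  congr 1
  ext θ
  exact intervalIntegral.integral_add (intervalIntegrable_slice hf _ _ _)
    (intervalIntegrable_slice hg _ _ _)

lemma torusInt_const_mul (k : ℝ) (f : ℝ → ℝ → ℝ) :
    torusInt (fun z θ => k * f z θ) = k * torusInt f := by
  simp [torusInt, intervalIntegral.integral_const_mul]

lemma torusInt_nonneg {f : ℝ → ℝ → ℝ} (h : ∀ z θ, 0 ≤ f z θ) : 0 ≤ torusInt f := by
  have hpi : (0:ℝ) ≤ 2 * Real.pi := by positivity
  exact intervalIntegral.integral_nonneg hpi fun θ _ =>
    intervalIntegral.integral_nonneg hpi fun z _ => h z θ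

lemma torusInt_deriv_z {f f' : ℝ → ℝ → ℝ} (hf' : Continuous f'.uncurry)
    (hd : ∀ z θ, HasDerivAt (fun q => f q θ) (f' z θ) z)
    (hper : ∀ θ, f (0 + 2 * Real.pi) θ = f 0 θ) : torusInt f' = 0 := by
  have : ∀ θ, ∫ z in (0:ℝ)..(2 * Real.pi), f' z θ = 0 := fun θ => by
    rw [intervalIntegral.integral_eq_sub_of_hasDerivAt (fun z _ => hd z θ)
      (intervalIntegrable_slice hf' _ _ _), ← hper θ]
    simp
  simp [torusInt, this]

lemma torusInt_deriv_theta {f f' : ℝ → ℝ → ℝ} (hf : Continuous f.uncurry)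
    (hf' : Continuous f'.uncurry)
    (hd : ∀ z θ, HasDerivAt (fun q => f z q) (f' z θ) θ)
    (hper : ∀ z, f z (0 + 2 * Real.pi) = f z 0) : torusInt f' = 0 := by
  have h := hasDerivAt_param_integral (f := fun θ z => f z θ) (f' := fun θ z => f' z θ)
    0 (2 * Real.pi) (hf.comp continuous_swap) (hf'.comp continuous_swap) fun θ z => hd z θ
  unfold torusInt
  rw [intervalIntegral.integral_eq_sub_of_hasDerivAt (fun θ _ => h θ)
      ((continuous_inner_torusInt hf').intervalIntegrable _ _)]
  simp only [zero_add] at hper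
  simp [hper]

lemma hasDerivAt_torusInt {f f' : ℝ → ℝ → ℝ → ℝ}
    (hf : Continuous fun p : ℝ × ℝ × ℝ => f p.1 p.2.1 p.2.2)
    (hf' : Continuous fun p : ℝ × ℝ × ℝ => f' p.1 p.2.1 p.2.2)
    (hd : ∀ t z θ, HasDerivAt (fun s => f s z θ) (f' t z θ) t) (t : ℝ) :
    HasDerivAt (fun s => torusInt (f s)) (torusInt (f' t)) t := by
  have key : ∀ g : ℝ → ℝ → ℝ → ℝ, (Continuous fun p : ℝ × ℝ × ℝ => g p.1 p.2.1 p.2.2) →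
      Continuous (Function.uncurry fun s θ => ∫ z in (0:ℝ)..(2 * Real.pi), g s z θ) := fun g hg =>
    intervalIntegral.continuous_parametric_intervalIntegral_of_continuous'
      (f := fun (q : ℝ × ℝ) z => g q.1 z q.2)
      (hg.comp (by fun_prop : Continuous fun r : (ℝ × ℝ) × ℝ => (r.1.1, r.2, r.1.2))) _ _
  refine hasDerivAt_param_integral _ _ (key f hf) (key f' hf') (fun s θ => ?_) t
  exact hasDerivAt_param_integral (f := fun s z => f s z θ) (f' := fun s z => f' s z θ) _ _
    (hf.comp (by fun_prop : Continuous fun r : ℝ × ℝ => (r.1, r.2, θ)))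
    (hf'.comp (by fun_prop : Continuous fun r : ℝ × ℝ => (r.1, r.2, θ))) (fun s z => hd s z θ) s

/-! ### Partial derivatives on space-time -/

/-- The derivative of `W`, a function of `(t, z, θ)`, in the constant direction `h`. -/
def dirD (h : ℝ × ℝ × ℝ) (W : ℝ × ℝ × ℝ → ℂ) (p : ℝ × ℝ × ℝ) : ℂ := fderiv ℝ W p h

/-- The unit vector in the `t` direction. -/
abbrev eT : ℝ × ℝ × ℝ := (1, 0, 0)

/-- The unit vector in the `z` direction. -/
abbrev eZ : ℝ × ℝ × ℝ := (0, 1, 0)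

/-- The unit vector in the `θ` direction. -/
abbrev eTh : ℝ × ℝ × ℝ := (0, 0, 1)

section dirD

variable {W V : ℝ × ℝ × ℝ → ℂ}

lemma contDiff_dirD (hW : ContDiff ℝ (⊤ : ℕ∞) W) (h : ℝ × ℝ × ℝ) :
    ContDiff ℝ (⊤ : ℕ∞) (dirD h W) :=
  (hW.fderiv_right (m := (⊤ : ℕ∞)) (by simp)).clm_apply contDiff_const

lemma dirD_comm (hW : ContDiff ℝ (⊤ : ℕ∞) W) (h k p : ℝ × ℝ × ℝ) :
    dirD h (dirD k W) p = dirD k (dirD h W) p := by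
  have hd : DifferentiableAt ℝ (fderiv ℝ W) p :=
    (hW.fderiv_right (m := (⊤ : ℕ∞)) (by simp)).differentiable (by simp) p
  have e : ∀ a b, dirD a (dirD b W) p = fderiv ℝ (fderiv ℝ W) p a b := fun a b => by
    unfold dirD
    rw [fderiv_clm_apply hd (by fun_prop)]
    simp
  rw [e, e]
  refine (hW.contDiffAt.isSymmSndFDerivAt ?_) h k
  rw [minSmoothness_of_isRCLikeNormedField]
  exact WithTop.coe_le_coe.2 (le_top : (2 : ℕ∞) ≤ ⊤)

lemma dirD_sub (hW : ContDiff ℝ (⊤ : ℕ∞) W) (hV : ContDiff ℝ (⊤ : ℕ∞) V) (h : ℝ × ℝ × ℝ) :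
    dirD h (fun p => W p - V p) = fun p => dirD h W p - dirD h V p := by
  ext p
  unfold dirD
  rw [fderiv_fun_sub (hW.differentiable (by simp) p) (hV.differentiable (by simp) p)]
  rfl

lemma dirD_periodic {k : ℝ × ℝ × ℝ} (hW : ∀ p, W (p + k) = W p) (h p : ℝ × ℝ × ℝ) :
    dirD h W (p + k) = dirD h W p := by
  unfold dirD
  rw [← fderiv_comp_add_right]
  simp [hW]

lemma hasDerivAt_t (hW : ContDiff ℝ (⊤ : ℕ∞) W) (t z θ : ℝ) :
    HasDerivAt (fun s => W (s, z, θ)) (dirD eT W (t, z, θ)) t :=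
  (hW.differentiable (by simp) (t, z, θ)).hasFDerivAt.comp_hasDerivAt t
    ((hasDerivAt_id t).prodMk ((hasDerivAt_const t z).prodMk (hasDerivAt_const t θ)))

lemma hasDerivAt_z (hW : ContDiff ℝ (⊤ : ℕ∞) W) (t z θ : ℝ) :
    HasDerivAt (fun s => W (t, s, θ)) (dirD eZ W (t, z, θ)) z :=
  (hW.differentiable (by simp) (t, z, θ)).hasFDerivAt.comp_hasDerivAt z
    ((hasDerivAt_const z t).prodMk ((hasDerivAt_id z).prodMk (hasDerivAt_const z θ)))

lemma hasDerivAt_th (hW : ContDiff ℝ (⊤ : ℕ∞) W) (t z θ : ℝ) :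
    HasDerivAt (fun s => W (t, z, s)) (dirD eTh W (t, z, θ)) θ :=
  (hW.differentiable (by simp) (t, z, θ)).hasFDerivAt.comp_hasDerivAt θ
    ((hasDerivAt_const θ t).prodMk ((hasDerivAt_const θ z).prodMk (hasDerivAt_id θ)))

/-- The Laplacian of the time slice of a space-time function, with the product rule carried out
and the iterated partials written through `dirD`. -/
def lapD (R : ℝ → ℝ) (W : ℝ × ℝ × ℝ → ℂ) (p : ℝ × ℝ × ℝ) : ℂ :=
  (R p.2.1)⁻¹ • (deriv R p.2.1 • dirD eZ W p + R p.2.1 • dirD eZ (dirD eZ W) p)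
    + ((R p.2.1) ^ 2)⁻¹ • dirD eTh (dirD eTh W) p

lemma lapg_eq_lapD {R : ℝ → ℝ} (hR : ContDiff ℝ (⊤ : ℕ∞) R) (hW : ContDiff ℝ (⊤ : ℕ∞) W)
    (t z θ : ℝ) : lapg R (fun w p => W (t, w, p)) z θ = lapD R W (t, z, θ) := by
  have hRd : HasDerivAt (fun w : ℝ => (R w : ℂ)) ((deriv R z : ℝ) : ℂ) z :=
    (hR.differentiable (by simp) z).hasDerivAt.ofReal_comp
  unfold lapg lapD
  simp only [(hasDerivAt_z hW _ _ _).deriv, (hasDerivAt_th hW _ _ _).deriv,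
    (hasDerivAt_th (contDiff_dirD hW eTh) _ _ _).deriv, Complex.real_smul]
  erw [(hRd.mul (hasDerivAt_z (contDiff_dirD hW eZ) t z θ)).deriv]
  push_cast
  ring

/-- The damped wave operator `∂_t² - Δ_g + a ∂_t`. -/
def waveD (R a : ℝ → ℝ) (W : ℝ × ℝ × ℝ → ℂ) (p : ℝ × ℝ × ℝ) : ℂ :=
  dirD eT (dirD eT W) p - lapD R W p + a p.2.1 • dirD eT W p

lemma waveD_eq {R : ℝ → ℝ} (a : ℝ → ℝ) (hR : ContDiff ℝ (⊤ : ℕ∞) R)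
    (hW : ContDiff ℝ (⊤ : ℕ∞) W) (t z θ : ℝ) :
    deriv (fun s : ℝ => deriv (fun s' : ℝ => W (s', z, θ)) s) t
        - lapg R (fun w p => W (t, w, p)) z θ + (a z : ℂ) * deriv (fun s : ℝ => W (s, z, θ)) t
      = waveD R a W (t, z, θ) := by
  simp only [lapg_eq_lapD hR hW, (hasDerivAt_t hW _ _ _).deriv,
    (hasDerivAt_t (contDiff_dirD hW eT) _ _ _).deriv, waveD, Complex.real_smul]

lemma waveD_sub (R a : ℝ → ℝ) (hW : ContDiff ℝ (⊤ : ℕ∞) W) (hV : ContDiff ℝ (⊤ : ℕ∞) V)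
    (p : ℝ × ℝ × ℝ) :
    waveD R a (fun p => W p - V p) p = waveD R a W p - waveD R a V p := by
  simp only [waveD, lapD, dirD_sub hW hV, dirD_sub (contDiff_dirD hW _) (contDiff_dirD hV _),
    Complex.real_smul]
  ring

lemma continuous_lapD {R : ℝ → ℝ} (hR : ContDiff ℝ (⊤ : ℕ∞) R) (hR0 : ∀ z, R z ≠ 0)
    (hW : ContDiff ℝ (⊤ : ℕ∞) W) : Continuous (lapD R W) := by
  have h0 : Continuous R := hR.continuous
  have h1 : Continuous (deriv R) := hR.continuous_deriv (by simp)
  have h2 := (contDiff_dirD hW eZ).continuous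
  have h3 := (contDiff_dirD (contDiff_dirD hW eZ) eZ).continuous
  have h4 := (contDiff_dirD (contDiff_dirD hW eTh) eTh).continuous
  have h5 : Continuous fun p : ℝ × ℝ × ℝ => (R p.2.1)⁻¹ :=
    (h0.comp (by fun_prop : Continuous fun p : ℝ × ℝ × ℝ => p.2.1)).inv₀ fun p => hR0 _
  unfold lapD
  simp only [← inv_pow]
  fun_prop

end dirD

/-! ### The energy identity -/

/-- The energy density with respect to `dz dθ`. -/
def eDens (R : ℝ → ℝ) (W : ℝ × ℝ × ℝ → ℂ) (t z θ : ℝ) : ℝ :=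
  (‖dirD eT W (t, z, θ)‖ ^ 2 + ‖dirD eZ W (t, z, θ)‖ ^ 2
    + ((R z) ^ 2)⁻¹ * ‖dirD eTh W (t, z, θ)‖ ^ 2) * R z

lemma energy_eq {R : ℝ → ℝ} {W : ℝ × ℝ × ℝ → ℂ} (hW : ContDiff ℝ (⊤ : ℕ∞) W) (t : ℝ) :
    energy R (fun s z θ => W (s, z, θ)) t = torusInt (eDens R W t) := by
  simp only [energy, torusInt, eDens, (hasDerivAt_t hW _ _ _).deriv, (hasDerivAt_z hW _ _ _).deriv,
    (hasDerivAt_th hW _ _ _).deriv]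

section Energy

variable {R : ℝ → ℝ} {W : ℝ × ℝ × ℝ → ℂ}

lemma continuous_eDens (hR : ContDiff ℝ (⊤ : ℕ∞) R) (hR0 : ∀ z, R z ≠ 0)
    (hW : ContDiff ℝ (⊤ : ℕ∞) W) :
    Continuous fun p : ℝ × ℝ × ℝ => eDens R W p.1 p.2.1 p.2.2 := by
  have h0 : Continuous R := hR.continuous
  have h1 := (contDiff_dirD hW eT).continuous
  have h2 := (contDiff_dirD hW eZ).continuous
  have h4 := (contDiff_dirD hW eTh).continuous
  have h5 : Continuous fun z => (R z)⁻¹ := h0.inv₀ hR0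
  unfold eDens
  simp only [← inv_pow]
  fun_prop (disch := exact fun _ => hR0 _)

/-- The energy identity `E'(t) = 2 ∫ Re⟨∂_t w, (∂_t² - Δ_g) w⟩ dvol`. The derivative of the
energy density differs from the integrand on the right by twice the divergence
`∂_z(R ⟨w_t, w_z⟩) + ∂_θ(R⁻¹ ⟨w_t, w_θ⟩)`, which integrates to zero by periodicity. -/
lemma hasDerivAt_energy (hR : ContDiff ℝ (⊤ : ℕ∞) R) (hR0 : ∀ z, R z ≠ 0)
    (hRper : ∀ z, R (z + 2 * Real.pi) = R z) (hW : ContDiff ℝ (⊤ : ℕ∞) W)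
    (hz : ∀ p, W (p + (0, 2 * Real.pi, 0)) = W p) (hth : ∀ p, W (p + (0, 0, 2 * Real.pi)) = W p)
    (t : ℝ) :
    HasDerivAt (fun s => torusInt (eDens R W s))
      (torusInt fun z θ => 2 * inner ℝ (dirD eT W (t, z, θ))
        (dirD eT (dirD eT W) (t, z, θ) - lapD R W (t, z, θ)) * R z) t := by
  have h0 : Continuous R := hR.continuous
  have h0' : Continuous (deriv R) := hR.continuous_deriv (by simp)
  have hT := contDiff_dirD hW eT
  have hZ := contDiff_dirD hW eZ
  have hH := contDiff_dirD hW eTh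
  have cT := hT.continuous
  have cZ := hZ.continuous
  have cH := hH.continuous
  have cTT := (contDiff_dirD hT eT).continuous
  have cTZ := (contDiff_dirD hZ eT).continuous
  have cTH := (contDiff_dirD hH eT).continuous
  have cZZ := (contDiff_dirD hZ eZ).continuous
  have cHH := (contDiff_dirD hH eTh).continuous
  have cL := continuous_lapD hR hR0 hW
  have cR : Continuous fun z => (R z)⁻¹ := h0.inv₀ hR0
  set e' : ℝ → ℝ → ℝ → ℝ := fun t z θ =>
    (2 * inner ℝ (dirD eT W (t, z, θ)) (dirD eT (dirD eT W) (t, z, θ))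
      + 2 * inner ℝ (dirD eZ W (t, z, θ)) (dirD eT (dirD eZ W) (t, z, θ))
      + ((R z) ^ 2)⁻¹ * (2 * inner ℝ (dirD eTh W (t, z, θ)) (dirD eT (dirD eTh W) (t, z, θ))))
      * R z with he'
  have hmain : HasDerivAt (fun s => torusInt (eDens R W s)) (torusInt (e' t)) t := by
    refine hasDerivAt_torusInt (continuous_eDens hR hR0 hW) ?_ (fun t z θ => ?_) t
    · simp only [he', ← inv_pow]
      fun_prop (disch := exact fun _ => hR0 _)
    · exact (((hasDerivAt_t hT t z θ).norm_sq.add (hasDerivAt_t hZ t z θ).norm_sq).add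
        ((hasDerivAt_t hH t z θ).norm_sq.const_mul _)).mul_const _
  set A' : ℝ → ℝ → ℝ := fun z θ =>
    deriv R z * inner ℝ (dirD eT W (t, z, θ)) (dirD eZ W (t, z, θ))
      + R z * (inner ℝ (dirD eT W (t, z, θ)) (dirD eZ (dirD eZ W) (t, z, θ))
        + inner ℝ (dirD eT (dirD eZ W) (t, z, θ)) (dirD eZ W (t, z, θ))) with hA'
  set B' : ℝ → ℝ → ℝ := fun z θ =>
    (R z)⁻¹ * (inner ℝ (dirD eT W (t, z, θ)) (dirD eTh (dirD eTh W) (t, z, θ))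
        + inner ℝ (dirD eT (dirD eTh W) (t, z, θ)) (dirD eTh W (t, z, θ))) with hB'
  have cA' : Continuous A'.uncurry := by
    simp only [hA', Function.uncurry_def]
    fun_prop (disch := exact fun _ => hR0 _)
  have cB' : Continuous B'.uncurry := by
    simp only [hB', Function.uncurry_def]
    fun_prop (disch := exact fun _ => hR0 _)
  have hA : torusInt A' = 0 := by
    refine torusInt_deriv_z (f := fun z θ =>
      R z * inner ℝ (dirD eT W (t, z, θ)) (dirD eZ W (t, z, θ))) cA' (fun z θ => ?_) fun θ => ?_
    · simp only [hA']
      rw [dirD_comm hW eT eZ]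
      exact (hR.differentiable (by simp) z).hasDerivAt.mul
        ((hasDerivAt_z hT t z θ).inner ℝ (hasDerivAt_z hZ t z θ))
    · have e : ((t, 0 + 2 * Real.pi, θ) : ℝ × ℝ × ℝ) = (t, 0, θ) + (0, 2 * Real.pi, 0) := by simp
      simp only [hRper, e, dirD_periodic hz]
  have hB : torusInt B' = 0 := by
    refine torusInt_deriv_theta (f := fun z θ =>
      (R z)⁻¹ * inner ℝ (dirD eT W (t, z, θ)) (dirD eTh W (t, z, θ))) ?_ cB'
      (fun z θ => ?_) fun z => ?_
    · simp only [Function.uncurry_def]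
      fun_prop (disch := exact fun _ => hR0 _)
    · simp only [hB']
      rw [dirD_comm hW eT eTh]
      exact ((hasDerivAt_th hT t z θ).inner ℝ (hasDerivAt_th hH t z θ)).const_mul _
    · have e : ((t, z, 0 + 2 * Real.pi) : ℝ × ℝ × ℝ) = (t, z, 0) + (0, 0, 2 * Real.pi) := by simp
      simp only [e, dirD_periodic hth]
  set S : ℝ → ℝ → ℝ := fun z θ => 2 * inner ℝ (dirD eT W (t, z, θ))
        (dirD eT (dirD eT W) (t, z, θ) - lapD R W (t, z, θ)) * R z with hS
  have cS : Continuous S.uncurry := by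
    simp only [hS, Function.uncurry_def]
    fun_prop (disch := exact fun _ => hR0 _)
  have hsum : e' t = fun z θ => S z θ + (2 * A' z θ + 2 * B' z θ) := by
    ext z θ
    have := hR0 z
    simp only [he', hS, hA', hB', lapD, inner_sub_right, inner_add_right, inner_smul_right,
      real_inner_comm]
    field_simp
    ring
  rw [hsum, torusInt_add cS (by fun_prop), torusInt_add (by fun_prop) (by fun_prop),
    torusInt_const_mul, torusInt_const_mul, hA, hB] at hmain
  simpa using hmain

/-- Gronwall argument: `(E + N / b²) exp(e^{-bt})` is nonincreasing, and its value at `t = 0`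
is `e N / b²`. -/
lemma gronwall_exp {E E' : ℝ → ℝ} {b N : ℝ} (hb : 0 < b) (hN : 0 ≤ N) (hE0 : ∀ s, 0 ≤ E s)
    (hE' : ∀ s, HasDerivAt E (E' s) s) (hinit : E 0 = 0)
    (hbound : ∀ s, 0 ≤ s → E' s ≤ Real.exp (-b * s) * (b * E s + b⁻¹ * N))
    {t : ℝ} (ht : 0 ≤ t) : E t ≤ 2 * (N / b ^ 2) := by
  have hexp : ∀ s, HasDerivAt (fun s => Real.exp (Real.exp (-b * s)))
      (Real.exp (Real.exp (-b * s)) * (Real.exp (-b * s) * -b)) s := fun s => by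
    simpa using ((hasDerivAt_id s).const_mul (-b)).exp.exp
  have hG : ∀ s, HasDerivAt (fun s => (E s + N / b ^ 2) * Real.exp (Real.exp (-b * s)))
      (E' s * Real.exp (Real.exp (-b * s))
        + (E s + N / b ^ 2) * (Real.exp (Real.exp (-b * s)) * (Real.exp (-b * s) * -b))) s :=
    fun s => ((hE' s).add_const _).mul (hexp s)
  have hanti : AntitoneOn (fun s => (E s + N / b ^ 2) * Real.exp (Real.exp (-b * s)))
      (Set.Ici 0) := by
    refine antitoneOn_of_deriv_nonpos (convex_Ici 0)
      (fun s _ => (hG s).continuousAt.continuousWithinAt)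
      (fun s _ => (hG s).differentiableAt.differentiableWithinAt) fun s hs => ?_
    rw [interior_Ici] at hs
    rw [(hG s).deriv]
    have e : E' s * Real.exp (Real.exp (-b * s))
        + (E s + N / b ^ 2) * (Real.exp (Real.exp (-b * s)) * (Real.exp (-b * s) * -b))
        = Real.exp (Real.exp (-b * s)) *
          (E' s - Real.exp (-b * s) * (b * E s + b⁻¹ * N)) := by field_simp; ring
    rw [e]
    exact mul_nonpos_of_nonneg_of_nonpos (Real.exp_pos _).le
      (sub_nonpos.2 (hbound s (le_of_lt hs)))
  have hfin := hanti (Set.mem_Ici.2 le_rfl) (Set.mem_Ici.2 ht) ht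
  simp only [hinit, mul_zero, Real.exp_zero, zero_add] at hfin
  have h1 : 1 ≤ Real.exp (Real.exp (-b * t)) := Real.one_le_exp (Real.exp_pos _).le
  have h2 : E t + N / b ^ 2 ≤ (E t + N / b ^ 2) * Real.exp (Real.exp (-b * t)) :=
    le_mul_of_one_le_right (add_nonneg (hE0 t) (by positivity)) h1
  have h3 : N / b ^ 2 * Real.exp 1 ≤ N / b ^ 2 * 3 := by
    gcongr
    exact Real.exp_one_lt_three.le
  linarith

/-- Pointwise form of the energy inequality: the damping term has a sign, and the source is
absorbed by Young's inequality with weight `b`. -/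
lemma eDens_bound (hRpos : ∀ z, 0 < R z) {a : ℝ → ℝ} (ha : ∀ z, 0 ≤ a z) {b : ℝ} (hb : 0 < b)
    {k : ℝ} (hk : 0 ≤ k) (x : ℂ) (s z θ : ℝ) (hsrc : ‖waveD R a W (s, z, θ)‖ ≤ k * ‖x‖) :
    2 * inner ℝ (dirD eT W (s, z, θ)) (dirD eT (dirD eT W) (s, z, θ) - lapD R W (s, z, θ)) * R z
      ≤ k * (b * eDens R W s z θ + b⁻¹ * (‖x‖ ^ 2 * R z)) := by
  have hRz := hRpos z
  have e4 : ‖dirD eT W (s, z, θ)‖ ^ 2 * R z ≤ eDens R W s z θ := by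
    unfold eDens
    gcongr
    rw [add_assoc]
    exact le_add_of_nonneg_right (by positivity)
  have e1 : dirD eT (dirD eT W) (s, z, θ) - lapD R W (s, z, θ)
      = waveD R a W (s, z, θ) - a z • dirD eT W (s, z, θ) := by simp [waveD]
  rw [e1]
  generalize dirD eT W (s, z, θ) = q at *
  have e2 : inner ℝ q (waveD R a W (s, z, θ) - a z • q) ≤ ‖q‖ * (k * ‖x‖) := by
    rw [inner_sub_right, inner_smul_right, real_inner_self_eq_norm_sq]
    have := real_inner_le_norm q (waveD R a W (s, z, θ))
    have := mul_le_mul_of_nonneg_left hsrc (norm_nonneg q)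
    have := mul_nonneg (ha z) (sq_nonneg ‖q‖)
    linarith
  have e3 : 2 * (‖q‖ * ‖x‖) ≤ b * ‖q‖ ^ 2 + b⁻¹ * ‖x‖ ^ 2 := by
    have : 0 ≤ b⁻¹ * (b * ‖q‖ - ‖x‖) ^ 2 := by positivity
    have e : b⁻¹ * (b * ‖q‖ - ‖x‖) ^ 2
      = b * ‖q‖ ^ 2 + b⁻¹ * ‖x‖ ^ 2 - 2 * (‖q‖ * ‖x‖) := by field_simp; ring
    linarith
  calc 2 * inner ℝ q (waveD R a W (s, z, θ) - a z • q) * R z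
      ≤ 2 * (‖q‖ * (k * ‖x‖)) * R z := by gcongr
    _ = k * (2 * (‖q‖ * ‖x‖) * R z) := by ring
    _ ≤ k * ((b * ‖q‖ ^ 2 + b⁻¹ * ‖x‖ ^ 2) * R z) := by gcongr
    _ = k * (b * (‖q‖ ^ 2 * R z) + b⁻¹ * (‖x‖ ^ 2 * R z)) := by ring
    _ ≤ k * (b * eDens R W s z θ + b⁻¹ * (‖x‖ ^ 2 * R z)) := by gcongr

/-- Energy estimate for the damped wave equation with vanishing data and a source bounded by
`e^{-bt} |r|`: integrating `eDens_bound` gives `E' ≤ e^{-bt} (b E + ‖r‖² / b)`. -/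
lemma energy_estimate (hR : ContDiff ℝ (⊤ : ℕ∞) R) (hRpos : ∀ z, 0 < R z)
    (hRper : ∀ z, R (z + 2 * Real.pi) = R z) (hW : ContDiff ℝ (⊤ : ℕ∞) W)
    (hz : ∀ p, W (p + (0, 2 * Real.pi, 0)) = W p) (hth : ∀ p, W (p + (0, 0, 2 * Real.pi)) = W p)
    {a : ℝ → ℝ} (ha : ∀ z, 0 ≤ a z) {b : ℝ} (hb : 0 < b) {r : ℝ → ℝ → ℂ}
    (hr : Continuous r.uncurry)
    (hsrc : ∀ t, 0 ≤ t → ∀ z θ, ‖waveD R a W (t, z, θ)‖ ≤ Real.exp (-b * t) * ‖r z θ‖)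
    (hW0 : ∀ z θ, W (0, z, θ) = 0) (hW1 : ∀ z θ, dirD eT W (0, z, θ) = 0)
    {t : ℝ} (ht : 0 ≤ t) :
    torusInt (eDens R W t) ≤ 2 * (l2normSq R r / b ^ 2) := by
  have hR0 : ∀ z, R z ≠ 0 := fun z => (hRpos z).ne'
  have h0 : Continuous R := hR.continuous
  have cT := (contDiff_dirD hW eT).continuous
  have cTT := (contDiff_dirD (contDiff_dirD hW eT) eT).continuous
  have cL := continuous_lapD hR hR0 hW
  have cE := continuous_eDens hR hR0 hW
  have cN : Continuous (Function.uncurry fun z θ => ‖r z θ‖ ^ 2 * R z) := by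
    have : (Function.uncurry fun z θ => ‖r z θ‖ ^ 2 * R z)
        = fun p => ‖r.uncurry p‖ ^ 2 * R p.1 := rfl
    rw [this]
    fun_prop
  have cEs : ∀ s, Continuous (Function.uncurry (eDens R W s)) := fun s => by
    have := cE.comp (by fun_prop : Continuous fun q : ℝ × ℝ => (s, q.1, q.2))
    simpa only [Function.uncurry_def, Function.comp_def] using this
  have hN : l2normSq R r = torusInt fun z θ => ‖r z θ‖ ^ 2 * R z := rfl
  have hinit : torusInt (eDens R W 0) = 0 := by
    have hz0 : ∀ z θ, dirD eZ W (0, z, θ) = 0 := fun z θ => by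
      rw [← (hasDerivAt_z hW 0 z θ).deriv]
      simp [hW0]
    have hth0 : ∀ z θ, dirD eTh W (0, z, θ) = 0 := fun z θ => by
      rw [← (hasDerivAt_th hW 0 z θ).deriv]
      simp [hW0]
    simp [torusInt, eDens, hW1, hz0, hth0]
  rw [hN]
  refine gronwall_exp (E := fun s => torusInt (eDens R W s)) hb ?_ (fun s => ?_)
    (hasDerivAt_energy hR hR0 hRper hW hz hth) hinit (fun s hs => ?_) ht
  · exact torusInt_nonneg fun z θ => by have := hRpos z; positivity
  · refine torusInt_nonneg fun z θ => ?_
    have := hRpos z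
    unfold eDens
    positivity
  · rw [← torusInt_const_mul, ← torusInt_const_mul b⁻¹, ← torusInt_add
      (by fun_prop) (by fun_prop), ← torusInt_const_mul]
    refine torusInt_mono ?_ ?_ fun z θ =>
      eDens_bound hRpos ha hb (Real.exp_pos _).le (r z θ) s z θ (hsrc s hs z θ)
    · simp only [Function.uncurry_def]
      fun_prop
    · exact (((cEs s).const_mul b).add (cN.const_mul b⁻¹)).const_mul _

end Energy

/-- **Quasimode approximation lemma.**  For each `c > 0` there is `C > 0` such
that for any `τ ∈ ℂ` with `Re τ ≥ 2`, `Im τ ≥ c / log(Re τ)`, any smooth `v` on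
`M` with `ρ = (−τ² − Δ_g + iτa)v`, and any smooth solution `u` of the damped
wave equation with data `(v, iτv)`, the difference `w = u − e^{itτ} v`
satisfies `E(w)(t) ≤ C² log²(Re τ) ‖ρ‖²_{L²(M)}` for all `t ≥ 0`. -/
theorem stmt2
    (ε₀ : ℝ) (hε₀ : ε₀ ∈ Set.Ioo (0:ℝ) (1/2))
    (R : ℝ → ℝ) (hRsmooth : ContDiff ℝ (⊤ : ℕ∞) R)
    (hRper : ∀ z, R (z + 2 * Real.pi) = R z)
    (hReven : ∀ z, R (-z) = R z)
    (hRge : ∀ z, 1 ≤ R z)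
    (hRquad : ∀ z, |z| ≤ 2 * ε₀ → ((R z) ^ 2)⁻¹ = 1 - z ^ 2)
    (hRderiv : ∀ z ∈ Set.Ioo (0:ℝ) Real.pi, 0 < deriv R z)
    (a : ℝ → ℝ) (hasmooth : ContDiff ℝ (⊤ : ℕ∞) a)
    (haper : ∀ z, a (z + 2 * Real.pi) = a z)
    (haeven : ∀ z, a (-z) = a z)
    (harange : ∀ z, a z ∈ Set.Icc (0:ℝ) 1)
    (hazero : ∀ z, |z| ≤ 2 * ε₀ → a z = 0)
    (haone : ∀ z, 3 * ε₀ ≤ |z| → |z| ≤ Real.pi → a z = 1)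
    (c : ℝ) (hc : 0 < c) :
    ∃ C > (0:ℝ), ∀ (τ : ℂ) (v : ℝ → ℝ → ℂ) (u : ℝ → ℝ → ℝ → ℂ),
      2 ≤ τ.re → c / Real.log τ.re ≤ τ.im →
      Smooth2 v → Periodic2 v →
      (ContDiff ℝ (⊤ : ℕ∞) (fun p : ℝ × ℝ × ℝ => u p.1 p.2.1 p.2.2)) →
      (∀ t z θ, u t (z + 2 * Real.pi) θ = u t z θ ∧ u t z (θ + 2 * Real.pi) = u t z θ) →
      (∀ t, 0 ≤ t → ∀ z θ,
        deriv (fun s : ℝ => deriv (fun s' : ℝ => u s' z θ) s) t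
          - lapg R (fun w p => u t w p) z θ
          + (a z : ℂ) * deriv (fun s : ℝ => u s z θ) t = 0) →
      (∀ z θ, u 0 z θ = v z θ) →
      (∀ z θ, deriv (fun s : ℝ => u s z θ) 0 = Complex.I * τ * v z θ) →
      ∀ t, 0 ≤ t →
        energy R (fun s z θ => u s z θ - Complex.exp (Complex.I * (s : ℂ) * τ) * v z θ) t
          ≤ C ^ 2 * (Real.log τ.re) ^ 2 *
            l2normSq R (fun z θ =>
              -τ ^ 2 * v z θ - lapg R v z θ + Complex.I * τ * (a z : ℂ) * v z θ) := by
  refine ⟨2 / c, by positivity, ?_⟩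
  intro τ v u hre him hv hvper hu huper heq hu0 hu1 t ht
  have hRpos : ∀ z, 0 < R z := fun z => one_pos.trans_le (hRge z)
  have hlog : 0 < Real.log τ.re := Real.log_pos (by linarith)
  set b := τ.im with hbdef
  have hcb : 0 < c / Real.log τ.re := by positivity
  have hb : 0 < b := hcb.trans_le him
  set U : ℝ × ℝ × ℝ → ℂ := fun p => u p.1 p.2.1 p.2.2 with hU
  set V : ℝ × ℝ × ℝ → ℂ :=
    fun p => Complex.exp (Complex.I * (p.1 : ℂ) * τ) * v p.2.1 p.2.2 with hVdef
  have hV : ContDiff ℝ (⊤ : ℕ∞) V := by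
    have h1 : ContDiff ℝ (⊤ : ℕ∞) fun p : ℝ × ℝ × ℝ => v p.2.1 p.2.2 :=
      ContDiff.comp (g := fun p : ℝ × ℝ => v p.1 p.2) hv contDiff_snd
    have h2 : ContDiff ℝ (⊤ : ℕ∞) fun p : ℝ × ℝ × ℝ => (p.1 : ℂ) :=
      Complex.ofRealCLM.contDiff.comp contDiff_fst
    exact ((contDiff_const.mul h2).mul contDiff_const).cexp.mul h1
  set W : ℝ × ℝ × ℝ → ℂ := fun p => U p - V p with hWdef
  have hW : ContDiff ℝ (⊤ : ℕ∞) W := hu.sub hV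
  set ρ : ℝ → ℝ → ℂ := fun z θ =>
    -τ ^ 2 * v z θ - lapg R v z θ + Complex.I * τ * (a z : ℂ) * v z θ with hρ
  have hexp : ∀ s : ℝ, HasDerivAt (fun s : ℝ => Complex.exp (Complex.I * (s : ℂ) * τ))
      (Complex.I * τ * Complex.exp (Complex.I * (s : ℂ) * τ)) s := fun s => by
    have h := (((hasDerivAt_id s).ofReal_comp.const_mul Complex.I).mul_const τ).cexp
    simp only [id] at h
    convert h using 1
    push_cast
    ring
  -- `e^{itτ} v` solves the damped wave equation with source `e^{itτ} ρ`.
  have hPV : ∀ s z θ, waveD R a V (s, z, θ) = Complex.exp (Complex.I * (s : ℂ) * τ) * ρ z θ := by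
    intro s z θ
    have hlap : lapg R (fun w p => V (s, w, p)) z θ
        = Complex.exp (Complex.I * (s : ℂ) * τ) * lapg R v z θ := by
      simp only [lapg, hVdef, deriv_const_mul_field, mul_left_comm _ (Complex.exp _)]
      ring
    rw [← waveD_eq a hRsmooth hV, hlap]
    simp only [hVdef, deriv_mul_const_field, (hexp _).deriv, deriv_const_mul_field, hρ]
    linear_combination (τ ^ 2 * Complex.exp (Complex.I * (s : ℂ) * τ) * v z θ) * Complex.I_sq
  have hPU : ∀ s, 0 ≤ s → ∀ z θ, waveD R a U (s, z, θ) = 0 := fun s hs z θ => by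
    rw [← waveD_eq a hRsmooth hu]
    exact heq s hs z θ
  have hρc : Continuous ρ.uncurry := by
    have e : ρ.uncurry = fun q : ℝ × ℝ => waveD R a V (0, q.1, q.2) := by
      ext ⟨z, θ⟩
      simp [hPV]
    rw [e]
    have c1 := (contDiff_dirD hV eT).continuous
    have c2 := (contDiff_dirD (contDiff_dirD hV eT) eT).continuous
    have c3 := continuous_lapD hRsmooth (fun z => (hRpos z).ne') hV
    have c4 := hasmooth.continuous
    unfold waveD
    fun_prop
  have hest := energy_estimate (W := W) (a := a) (r := ρ) hRsmooth hRpos hRper hW ?_ ?_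
    (fun z => (harange z).1) hb hρc ?_ ?_ ?_ ht
  · have hen := energy_eq (R := R) hW t
    change energy R (fun s z θ => W (s, z, θ)) t ≤ _
    rw [hen]
    refine hest.trans ?_
    have hN0 : 0 ≤ l2normSq R ρ := torusInt_nonneg (f := fun z θ => ‖ρ z θ‖ ^ 2 * R z)
      fun z θ => by have := hRpos z; positivity
    have h1 : (c / Real.log τ.re) ^ 2 ≤ b ^ 2 := by gcongr
    have h2 : l2normSq R ρ / b ^ 2 ≤ l2normSq R ρ / (c / Real.log τ.re) ^ 2 := by gcongr
    have h3 : (2 / c) ^ 2 * Real.log τ.re ^ 2 * l2normSq R ρ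
        = 4 * (l2normSq R ρ / (c / Real.log τ.re) ^ 2) := by field_simp; ring
    have h4 : 0 ≤ l2normSq R ρ / (c / Real.log τ.re) ^ 2 := by positivity
    rw [h3]
    linarith
  · rintro ⟨s, z, θ⟩
    simp [hWdef, hU, hVdef, (huper s z θ).1, (hvper z θ).1]
  · rintro ⟨s, z, θ⟩
    simp [hWdef, hU, hVdef, (huper s z θ).2, (hvper z θ).2]
  · intro s hs z θ
    rw [hWdef, waveD_sub R a hu hV, hPU s hs, hPV, zero_sub, norm_neg, norm_mul, Complex.norm_exp]
    refine le_of_eq ?_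
    congr 2
    simp [hbdef]
    ring
  · intro z θ
    simp [hWdef, hU, hVdef, hu0]
  · intro z θ
    have h1 := hu1 z θ
    have h2 := (hexp 0).mul_const (v z θ)
    have h3 := (hasDerivAt_t hV 0 z θ).unique h2
    have h4 := (hasDerivAt_t hu 0 z θ).deriv
    rw [hWdef, dirD_sub hu hV]
    simp only [h3]
    rw [← h4, h1]
    simp

end
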